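/- arXiv:1712.04013 — 2 statements merged into one kernel-verified Lean document; each statement's English description precedes it below -/
import Mathlib

section
/- Let X be a measurable space and Q a weighted evolution operator on X satisfying the minorization condition with constant ε ∈ (0,1) and probability measure η. Then there exists a unique probability measure μ∞ on X satisfying the fixed-point (stationarity) equation μ∞(Qφ) = μ∞(Q1)·μ∞(φ) for every bounded measurable function φ. Moreover, for every probability measure μ on X and every n ∈ ℕ, ‖Φ_n(μ) − μ∞‖_TV ≤ 2(1 − ε²)ⁿ; in particular the limit μ∞ does not depend on the initial measure μ. -/
open MeasureTheory ProbabilityTheory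

/-- The action of a weighted evolution operator given by a kernel `κ`:
`(Qφ)(q) = ∫ φ(q') κ(q, dq')`. -/
noncomputable def evolOp {X : Type*} [MeasurableSpace X] (κ : Kernel X X) (φ : X → ℝ) : X → ℝ :=
  fun q => ∫ q', φ q' ∂(κ q)

/-- Bounded measurable real-valued functions. -/
def BddMeas {X : Type*} [MeasurableSpace X] (φ : X → ℝ) : Prop :=
  Measurable φ ∧ ∃ C : ℝ, ∀ x, |φ x| ≤ C

/-- Minorization condition: `ε η(φ) ≤ (Qφ)(q) ≤ ε⁻¹ η(φ)` for all bounded measurable `φ ≥ 0`. -/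
def Minorizes {X : Type*} [MeasurableSpace X] (Q : (X → ℝ) → (X → ℝ)) (ε : ℝ)
    (η : Measure X) : Prop :=
  ∀ φ : X → ℝ, BddMeas φ → (∀ x, 0 ≤ φ x) → ∀ q,
    ε * ∫ x, φ x ∂η ≤ Q φ q ∧ Q φ q ≤ ε⁻¹ * ∫ x, φ x ∂η

/-- The discretized Feynman–Kac semigroup `Φ_n(μ)(φ) = μ(Qⁿφ)/μ(Qⁿ1)`. -/
noncomputable def FK {X : Type*} [MeasurableSpace X] (κ : Kernel X X) (μ : Measure X)
    (n : ℕ) (φ : X → ℝ) : ℝ :=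
  (∫ q, (evolOp κ)^[n] φ q ∂μ) / (∫ q, (evolOp κ)^[n] (fun _ => (1:ℝ)) q ∂μ)

/-- Fixed-point (stationarity) equation: `μ(Qφ) = μ(Q1)·μ(φ)` for all bounded measurable φ. -/
def FixedPt {X : Type*} [MeasurableSpace X] (κ : Kernel X X) (μ : Measure X) : Prop :=
  ∀ φ : X → ℝ, BddMeas φ →
    ∫ q, evolOp κ φ q ∂μ = (∫ q, evolOp κ (fun _ => (1:ℝ)) q ∂μ) * ∫ q, φ q ∂μ

/-
The minorization controls ratios: for `f, h ≥ 0` it gives `ε² η(f) Qh ≤ η(h) Qf`. Hence, if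
`a Qⁿ1 ≤ Qⁿφ ≤ b Qⁿ1`, applying this to `f = Qⁿφ - a Qⁿ1` and `f = b Qⁿ1 - Qⁿφ`, with `h = Qⁿ1`,
yields an enclosure of `Qⁿ⁺¹φ` that is shorter by the factor `1 - ε²`. Integrating against `μ` and
`ν` traps `Φ_n(μ)(φ)` and `Φ_n(ν)(φ)` in the same interval of length `(1 - ε²)ⁿ (b - a)`. With the
semigroup property this makes `Φ_n(η)(A)` a Cauchy sequence for every `A`. Its limit is countably
additive because `Φ_n(η) ≤ ε⁻² η` for `n ≥ 1`, and it is invariant because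
`Φ_n(μ)(Qφ) = Φ_n(μ)(Q1) Φ_{n+1}(μ)(φ)`.
-/

open Filter Topology

section SetwiseConvergence

variable {X ι : Type*} [MeasurableSpace X] {l : Filter ι} [l.IsCountablyGenerated]

lemma exists_measure_tendsto_of_eventually_le [l.NeBot] {ν : ι → Measure X} {ρ : Measure X}
    [IsFiniteMeasure ρ] (hle : ∀ᶠ i in l, ν i ≤ ρ)
    (hlim : ∀ A, MeasurableSet A → ∃ c, Tendsto (fun i => ν i A) l (𝓝 c)) :
    ∃ μ : Measure X, ∀ A, MeasurableSet A → Tendsto (fun i => ν i A) l (𝓝 (μ A)) := by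
  choose m hm using hlim
  have m_empty : m ∅ .empty = 0 :=
    tendsto_nhds_unique (hm ∅ .empty) (by simp only [measure_empty, tendsto_const_nhds])
  have m_iUnion ⦃A : ℕ → Set X⦄ (hA : ∀ k, MeasurableSet (A k))
      (hd : Pairwise (Function.onFun Disjoint A)) :
      m (⋃ k, A k) (.iUnion hA) = ∑' k, m (A k) (hA k) := by
    refine tendsto_nhds_unique (hm _ (.iUnion hA)) ?_
    simp only [measure_iUnion hd hA, ← lintegral_count]
    refine tendsto_lintegral_filter_of_dominated_convergence (fun k => ρ (A k))
      (.of_forall fun _ => .of_discrete) (hle.mono fun i hi => ae_of_all _ fun k => hi (A k)) ?_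
      (ae_of_all _ fun k => hm (A k) (hA k))
    rw [lintegral_count, ← measure_iUnion hd hA]
    exact measure_ne_top ρ _
  refine ⟨.ofMeasurable m m_empty m_iUnion, fun A hA => ?_⟩
  rw [Measure.ofMeasurable_apply A hA]
  exact hm A hA

lemma integral_eq_setIntegral_measureReal_le_sub {φ : X → ℝ} (hφ : Measurable φ) {C : ℝ}
    (hC : ∀ x, |φ x| ≤ C) (ρ : Measure X) [IsFiniteMeasure ρ] :
    ∫ x, φ x ∂ρ =
      (∫ t in Set.Ioc 0 (2 * C), ρ.real {x | t ≤ φ x + C}) - ρ.real Set.univ * C := by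
  have hφi : Integrable φ ρ := .of_bound hφ.aestronglyMeasurable C (ae_of_all _ hC)
  have layercake : ∫ x, φ x + C ∂ρ = ∫ t in Set.Ioc 0 (2 * C), ρ.real {x | t ≤ φ x + C} :=
    (hφi.add (integrable_const C)).integral_eq_integral_Ioc_meas_le
      (ae_of_all _ fun x => neg_le_iff_add_nonneg.1 (abs_le.1 (hC x)).1)
      (ae_of_all _ fun x => (add_le_add_left (abs_le.1 (hC x)).2 C).trans_eq (two_mul C).symm)
  rw [← layercake, integral_add hφi (integrable_const C), integral_const, smul_eq_mul,
    add_sub_cancel_right]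

lemma tendsto_integral_of_tendsto_measureReal {ν : ι → Measure X} [∀ i, IsFiniteMeasure (ν i)]
    {μ : Measure X} [IsFiniteMeasure μ]
    (hν : ∀ A, MeasurableSet A → Tendsto (fun i => (ν i).real A) l (𝓝 (μ.real A)))
    {φ : X → ℝ} (hφ : BddMeas φ) :
    Tendsto (fun i => ∫ x, φ x ∂(ν i)) l (𝓝 (∫ x, φ x ∂μ)) := by
  obtain ⟨φ_meas, C, hC⟩ := hφ
  simp only [integral_eq_setIntegral_measureReal_le_sub φ_meas hC]
  have mass_bound : ∀ᶠ i in l, (ν i).real Set.univ ≤ μ.real Set.univ + 1 :=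
    (hν Set.univ .univ).eventually_le_const (lt_add_one _)
  refine Tendsto.sub ?_ ((hν Set.univ .univ).mul_const C)
  refine tendsto_integral_filter_of_dominated_convergence (fun _ => μ.real Set.univ + 1)
    (.of_forall fun i => ?_) (mass_bound.mono fun i hi => ae_of_all _ fun t => ?_)
    (integrable_const _) (ae_of_all _ fun t => ?_)
  · have tail_antitone : Antitone fun t => (ν i).real {x | t ≤ φ x + C} :=
      fun s t hst => measureReal_mono fun x hx => hst.trans hx
    exact tail_antitone.measurable.aestronglyMeasurable
  · rw [Real.norm_of_nonneg measureReal_nonneg]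
    exact (measureReal_mono (Set.subset_univ _)).trans hi
  · exact hν _ (measurableSet_le measurable_const (φ_meas.add_const C))

end SetwiseConvergence

section EvolutionOperator

variable {X : Type*} [MeasurableSpace X] {f g : X → ℝ}

lemma bddMeas_const (c : ℝ) : BddMeas (fun _ : X => c) :=
  ⟨measurable_const, |c|, fun _ => le_rfl⟩

lemma bddMeas_indicator_one {A : Set X} (hA : MeasurableSet A) :
    BddMeas (A.indicator fun _ => (1 : ℝ)) :=
  ⟨measurable_const.indicator hA, 1, fun x => by by_cases hx : x ∈ A <;> simp [hx]⟩

lemma BddMeas.const_smul (hf : BddMeas f) (c : ℝ) : BddMeas (c • f) := by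
  obtain ⟨f_meas, C, hC⟩ := hf
  refine ⟨f_meas.const_smul c, |c| * C, fun x => ?_⟩
  rw [Pi.smul_apply, smul_eq_mul, abs_mul]
  exact mul_le_mul_of_nonneg_left (hC x) (abs_nonneg c)

lemma BddMeas.neg (hf : BddMeas f) : BddMeas (-f) := by
  simpa only [neg_one_smul] using hf.const_smul (-1)

lemma BddMeas.sub (hf : BddMeas f) (hg : BddMeas g) : BddMeas (f - g) := by
  obtain ⟨f_meas, C, hC⟩ := hf
  obtain ⟨g_meas, D, hD⟩ := hg
  exact ⟨f_meas.sub g_meas, C + D, fun x => (abs_sub _ _).trans (add_le_add (hC x) (hD x))⟩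

lemma BddMeas.integrable (hf : BddMeas f) (μ : Measure X) [IsFiniteMeasure μ] :
    Integrable f μ := by
  obtain ⟨f_meas, C, hC⟩ := hf
  exact .of_bound f_meas.aestronglyMeasurable C (ae_of_all _ hC)

variable (κ : Kernel X X)

lemma evolOp_neg (f : X → ℝ) : evolOp κ (-f) = -evolOp κ f :=
  funext fun _ => integral_neg f

variable [IsFiniteKernel κ]

lemma evolOp_sub_const_smul (hf : BddMeas f) (hg : BddMeas g) (c : ℝ) :
    evolOp κ (f - c • g) = evolOp κ f - c • evolOp κ g := by
  funext q
  exact (integral_sub (hf.integrable (κ q)) ((hg.const_smul c).integrable (κ q))).trans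
    (congrArg _ (integral_smul c g))

lemma BddMeas.evolOp (hf : BddMeas f) : BddMeas (evolOp κ f) := by
  obtain ⟨f_meas, C, hC⟩ := hf
  refine ⟨(f_meas.stronglyMeasurable.integral_kernel (κ := κ)).measurable,
    C * κ.bound.toReal, fun q => ?_⟩
  have C_nonneg : 0 ≤ C := (abs_nonneg _).trans (hC q)
  have mass_le : (κ q).real Set.univ ≤ κ.bound.toReal :=
    ENNReal.toReal_mono (Kernel.bound_ne_top κ) (Kernel.measure_le_bound κ q _)
  exact (norm_integral_le_of_norm_le_const (f := f) (ae_of_all _ hC)).trans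
    (mul_le_mul_of_nonneg_left mass_le C_nonneg)

lemma BddMeas.iterate_evolOp (hf : BddMeas f) (n : ℕ) : BddMeas ((_root_.evolOp κ)^[n] f) :=
  Function.Iterate.rec BddMeas hf (fun _ hg => hg.evolOp κ) n

instance isFiniteKernel_pow (n : ℕ) : IsFiniteKernel (κ ^ n) := by
  induction n with
  | zero => exact inferInstanceAs (IsFiniteKernel Kernel.id)
  | succ n ih =>
    rw [Kernel.pow_add κ n 1, pow_one]
    infer_instance

lemma evolOp_pow (hf : BddMeas f) (n : ℕ) : evolOp (κ ^ n) f = (evolOp κ)^[n] f := by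
  induction n with
  | zero =>
    funext q
    exact integral_dirac' f q hf.1.stronglyMeasurable
  | succ n ih =>
    funext q
    rw [Function.iterate_succ_apply', ← ih, Kernel.pow_add κ n 1, pow_one]
    exact Kernel.integral_comp (hf.integrable _)

lemma integral_pow_comp (hf : BddMeas f) (μ : Measure X) [IsFiniteMeasure μ] (n : ℕ) :
    ∫ x, f x ∂((κ ^ n) ∘ₘ μ) = ∫ x, (evolOp κ)^[n] f x ∂μ := by
  rw [← evolOp_pow κ hf, Measure.comp_eq_comp_const_apply, Kernel.integral_comp]
  · simp [evolOp]
  · exact hf.integrable _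

end EvolutionOperator

section Minorization

variable {X : Type*} [MeasurableSpace X] {ε : ℝ} {η : Measure X} {f g h : X → ℝ} {a b : ℝ}

lemma Minorizes.sq_mul_integral_mul_le {Q : (X → ℝ) → X → ℝ} (hmin : Minorizes Q ε η)
    (hε : 0 < ε) (hf : BddMeas f) (hf0 : ∀ x, 0 ≤ f x) (hh : BddMeas h) (hh0 : ∀ x, 0 ≤ h x)
    (q : X) : ε ^ 2 * (∫ x, f x ∂η) * Q h q ≤ (∫ x, h x ∂η) * Q f q := by
  have f_nonneg : 0 ≤ ∫ x, f x ∂η := integral_nonneg hf0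
  have h_nonneg : 0 ≤ ∫ x, h x ∂η := integral_nonneg hh0
  calc ε ^ 2 * (∫ x, f x ∂η) * Q h q
      ≤ ε ^ 2 * (∫ x, f x ∂η) * (ε⁻¹ * ∫ x, h x ∂η) := by
        gcongr
        exact (hmin h hh hh0 q).2
    _ = (∫ x, h x ∂η) * (ε * ∫ x, f x ∂η) := by field_simp
    _ ≤ (∫ x, h x ∂η) * Q f q := by
        gcongr
        exact (hmin f hf hf0 q).1

variable {κ : Kernel X X} [IsFiniteKernel κ]

lemma Minorizes.improved_lower_bound [IsFiniteMeasure η] (hmin : Minorizes (evolOp κ) ε η)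
    (hε : 0 < ε) (hg : BddMeas g) (hh : BddMeas h) (hh0 : ∀ x, 0 ≤ h x) (hη : 0 < ∫ x, h x ∂η)
    (ha : ∀ x, a * h x ≤ g x) (q : X) :
    (a + ε ^ 2 * ((∫ x, g x ∂η) / (∫ x, h x ∂η) - a)) * evolOp κ h q ≤ evolOp κ g q := by
  have key := hmin.sq_mul_integral_mul_le hε (hg.sub (hh.const_smul a))
    (fun x => sub_nonneg.2 (ha x)) hh hh0 q
  rw [evolOp_sub_const_smul κ hg hh] at key
  simp only [Pi.sub_apply, Pi.smul_apply, smul_eq_mul] at key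
  rw [integral_sub (hg.integrable η) ((hh.integrable η).const_mul a), integral_const_mul] at key
  refine le_of_mul_le_mul_left ?_ hη
  calc _ = ε ^ 2 * ((∫ x, g x ∂η) - a * ∫ x, h x ∂η) * evolOp κ h q
        + (∫ x, h x ∂η) * (a * evolOp κ h q) := by field_simp; ring
    _ ≤ _ := by linarith

lemma Minorizes.exists_evolOp_mem_Icc [IsFiniteMeasure η] (hmin : Minorizes (evolOp κ) ε η)
    (hε : 0 < ε) (hg : BddMeas g) (hh : BddMeas h) (hh0 : ∀ x, 0 ≤ h x) (hη : 0 < ∫ x, h x ∂η)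
    (hab : ∀ x, g x ∈ Set.Icc (a * h x) (b * h x)) :
    ∃ a' b', b' - a' = (1 - ε ^ 2) * (b - a) ∧
      ∀ q, evolOp κ g q ∈ Set.Icc (a' * evolOp κ h q) (b' * evolOp κ h q) := by
  set m := (∫ x, g x ∂η) / ∫ x, h x ∂η
  refine ⟨a + ε ^ 2 * (m - a), b - ε ^ 2 * (b - m), by ring, fun q => ⟨?_, ?_⟩⟩
  · exact hmin.improved_lower_bound hε hg hh hh0 hη (fun x => (hab x).1) q
  · have key := hmin.improved_lower_bound (a := -b) hε hg.neg hh hh0 hη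
      (fun x => by simpa only [neg_mul, Pi.neg_apply, neg_le_neg_iff] using (hab x).2) q
    simp only [evolOp_neg, Pi.neg_apply, integral_neg, neg_div] at key
    linarith

variable [IsProbabilityMeasure η]

lemma Minorizes.pow_le_iterate_evolOp_one (hmin : Minorizes (evolOp κ) ε η) (hε : 0 < ε) (n : ℕ)
    (q : X) : ε ^ n ≤ (evolOp κ)^[n] (fun _ => 1) q := by
  induction n generalizing q with
  | zero => simp
  | succ n ih =>
    have hh := (bddMeas_const (X := X) 1).iterate_evolOp κ n
    have pow_le_integral : ε ^ n ≤ ∫ x, (evolOp κ)^[n] (fun _ => 1) x ∂η :=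
      (convex_Ici (ε ^ n)).integral_mem isClosed_Ici (ae_of_all _ ih) (hh.integrable η)
    rw [Function.iterate_succ_apply', pow_succ']
    exact (mul_le_mul_of_nonneg_left pow_le_integral hε.le).trans
      (hmin _ hh (fun x => (pow_pos hε n).le.trans (ih x)) q).1

lemma Minorizes.integral_iterate_evolOp_one_pos (hmin : Minorizes (evolOp κ) ε η) (hε : 0 < ε)
    (μ : Measure X) [IsProbabilityMeasure μ] (n : ℕ) :
    0 < ∫ q, (evolOp κ)^[n] (fun _ => 1) q ∂μ := by
  have pow_le : ε ^ n ≤ ∫ q, (evolOp κ)^[n] (fun _ => 1) q ∂μ :=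
    (convex_Ici (ε ^ n)).integral_mem isClosed_Ici
      (ae_of_all _ (hmin.pow_le_iterate_evolOp_one hε n))
      (((bddMeas_const 1).iterate_evolOp κ n).integrable μ)
  exact (pow_pos hε n).trans_le pow_le

lemma Minorizes.exists_iterate_evolOp_mem_Icc (hmin : Minorizes (evolOp κ) ε η) (hε : 0 < ε)
    (hg : BddMeas g) (hab : ∀ x, g x ∈ Set.Icc a b) (n : ℕ) :
    ∃ a' b', b' - a' = (1 - ε ^ 2) ^ n * (b - a) ∧ ∀ q, (evolOp κ)^[n] g q ∈
      Set.Icc (a' * (evolOp κ)^[n] (fun _ => 1) q) (b' * (evolOp κ)^[n] (fun _ => 1) q) := by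
  induction n with
  | zero => exact ⟨a, b, by simp, by simpa using hab⟩
  | succ n ih =>
    obtain ⟨a', b', hlen, hmem⟩ := ih
    obtain ⟨a'', b'', hlen', hmem'⟩ := hmin.exists_evolOp_mem_Icc hε (hg.iterate_evolOp κ n)
      ((bddMeas_const 1).iterate_evolOp κ n)
      (fun x => (pow_pos hε n).le.trans (hmin.pow_le_iterate_evolOp_one hε n x))
      (hmin.integral_iterate_evolOp_one_pos hε η n) hmem
    simp only [Function.iterate_succ_apply']
    exact ⟨a'', b'', by rw [hlen', hlen]; ring, hmem'⟩

lemma Minorizes.abs_FK_sub_FK_le (hmin : Minorizes (evolOp κ) ε η) (hε : 0 < ε)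
    (hg : BddMeas g) (hab : ∀ x, g x ∈ Set.Icc a b) (μ ν : Measure X) [IsProbabilityMeasure μ]
    [IsProbabilityMeasure ν] (n : ℕ) :
    |FK κ μ n g - FK κ ν n g| ≤ (1 - ε ^ 2) ^ n * (b - a) := by
  obtain ⟨a', b', hlen, hmem⟩ := hmin.exists_iterate_evolOp_mem_Icc hε hg hab n
  have FK_mem (ρ : Measure X) [IsProbabilityMeasure ρ] : FK κ ρ n g ∈ Set.Icc a' b' := by
    have hpos := hmin.integral_iterate_evolOp_one_pos hε ρ n
    have h_int := ((bddMeas_const 1).iterate_evolOp κ n).integrable ρ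
    have g_int := (hg.iterate_evolOp κ n).integrable ρ
    rw [FK, Set.mem_Icc, le_div_iff₀ hpos, div_le_iff₀ hpos, ← integral_const_mul,
      ← integral_const_mul]
    exact ⟨integral_mono (h_int.const_mul a') g_int fun q => (hmem q).1,
      integral_mono g_int (h_int.const_mul b') fun q => (hmem q).2⟩
  rw [← hlen]
  exact Real.dist_le_of_mem_Icc (FK_mem μ) (FK_mem ν)

end Minorization

section FeynmanKacMeasure

variable {X : Type*} [MeasurableSpace X] {f : X → ℝ}

/-- The measure `Φ_n(μ)`: the image `μQⁿ` of `μ` under `n` steps of the kernel, normalized to total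
mass one. It represents the functional `FK κ μ n`; see `FK_eq_integral_fkMeasure`. -/
noncomputable def fkMeasure (κ : Kernel X X) (μ : Measure X) (n : ℕ) : Measure X :=
  (((κ ^ n) ∘ₘ μ) Set.univ)⁻¹ • ((κ ^ n) ∘ₘ μ)

variable {κ : Kernel X X} [IsFiniteKernel κ]

lemma FK_eq_integral_fkMeasure (hf : BddMeas f) (μ : Measure X) [IsFiniteMeasure μ] (n : ℕ) :
    FK κ μ n f = ∫ x, f x ∂(fkMeasure κ μ n) := by
  have mass_eq : (((κ ^ n) ∘ₘ μ) Set.univ).toReal = ∫ q, (evolOp κ)^[n] (fun _ => 1) q ∂μ := by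
    rw [← integral_pow_comp κ (bddMeas_const 1), integral_const, smul_eq_mul, mul_one, Measure.real]
  rw [fkMeasure, integral_smul_measure, integral_pow_comp κ hf, ENNReal.toReal_inv, mass_eq,
    smul_eq_mul, FK, div_eq_inv_mul]

lemma FK_indicator_one_eq_fkMeasure_real {A : Set X} (hA : MeasurableSet A) (μ : Measure X)
    [IsFiniteMeasure μ] (n : ℕ) :
    FK κ μ n (A.indicator fun _ => 1) = (fkMeasure κ μ n).real A := by
  rw [FK_eq_integral_fkMeasure (bddMeas_indicator_one hA)]
  exact integral_indicator_one hA

variable {ε : ℝ} {η : Measure X} [IsProbabilityMeasure η]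

lemma Minorizes.isProbabilityMeasure_fkMeasure (hmin : Minorizes (evolOp κ) ε η) (hε : 0 < ε)
    (μ : Measure X) [IsProbabilityMeasure μ] (n : ℕ) :
    IsProbabilityMeasure (fkMeasure κ μ n) := by
  have : NeZero ((κ ^ n) ∘ₘ μ) := ⟨fun h0 => by
    have hpos := hmin.integral_iterate_evolOp_one_pos hε μ n
    rw [← integral_pow_comp κ (bddMeas_const 1), h0, integral_zero_measure] at hpos
    exact hpos.false⟩
  exact isProbabilityMeasureSMul

lemma Minorizes.FK_add (hmin : Minorizes (evolOp κ) ε η) (hε : 0 < ε) (hf : BddMeas f)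
    (μ : Measure X) [IsProbabilityMeasure μ] (m n : ℕ) :
    FK κ μ (n + m) f = FK κ (fkMeasure κ μ m) n f := by
  have hpos := hmin.integral_iterate_evolOp_one_pos hε μ m
  rw [FK, FK, ← FK_eq_integral_fkMeasure (hf.iterate_evolOp κ n),
    ← FK_eq_integral_fkMeasure ((bddMeas_const 1).iterate_evolOp κ n), FK, FK,
    div_div_div_cancel_right₀ hpos.ne']
  simp only [← Function.iterate_add_apply, add_comm m n]

lemma Minorizes.FK_evolOp (hmin : Minorizes (evolOp κ) ε η) (hε : 0 < ε) (f : X → ℝ)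
    (μ : Measure X) [IsProbabilityMeasure μ] (n : ℕ) :
    FK κ μ n (evolOp κ f) = FK κ μ n (evolOp κ fun _ => 1) * FK κ μ (n + 1) f := by
  have hpos := hmin.integral_iterate_evolOp_one_pos hε μ (n + 1)
  simp only [FK, ← Function.iterate_succ_apply]
  field_simp

lemma Minorizes.fkMeasure_succ_le (hmin : Minorizes (evolOp κ) ε η) (hε : 0 < ε)
    (μ : Measure X) [IsProbabilityMeasure μ] (n : ℕ) :
    fkMeasure κ μ (n + 1) ≤ ENNReal.ofReal (ε⁻¹ ^ 2) • η := by
  have := hmin.isProbabilityMeasure_fkMeasure hε μ n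
  have := hmin.isProbabilityMeasure_fkMeasure hε μ (n + 1)
  refine Measure.le_iff.2 fun A hA => ?_
  have hφ := bddMeas_indicator_one hA
  have hφ0 : ∀ x, 0 ≤ A.indicator (fun _ => (1 : ℝ)) x :=
    Set.indicator_nonneg fun _ _ => zero_le_one
  have lower : ε ≤ FK κ μ n (evolOp κ fun _ => 1) := by
    rw [FK_eq_integral_fkMeasure ((bddMeas_const 1).evolOp κ)]
    exact (convex_Ici ε).integral_mem isClosed_Ici
      (ae_of_all _ fun q => by simpa using hmin.pow_le_iterate_evolOp_one hε 1 q)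
      (((bddMeas_const 1).evolOp κ).integrable _)
  have upper : FK κ μ n (evolOp κ (A.indicator fun _ => 1)) ≤ ε⁻¹ * η.real A := by
    rw [FK_eq_integral_fkMeasure (hφ.evolOp κ), ← integral_indicator_one hA]
    exact (convex_Iic _).integral_mem isClosed_Iic (ae_of_all _ fun q => (hmin _ hφ hφ0 q).2)
      ((hφ.evolOp κ).integrable _)
  have real_le : (fkMeasure κ μ (n + 1)).real A ≤ ε⁻¹ ^ 2 * η.real A := by
    rw [hmin.FK_evolOp hε, FK_indicator_one_eq_fkMeasure_real hA] at upper
    have := (mul_le_mul_of_nonneg_right lower measureReal_nonneg).trans upper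
    rw [sq, mul_assoc]
    exact (le_inv_mul_iff₀ hε).2 this
  rw [Measure.smul_apply, smul_eq_mul, ← ofReal_measureReal, ← ofReal_measureReal,
    ← ENNReal.ofReal_mul (by positivity)]
  exact ENNReal.ofReal_le_ofReal real_le

end FeynmanKacMeasure

section InvariantMeasure

variable {X : Type*} [MeasurableSpace X] {κ : Kernel X X} [IsFiniteKernel κ] {ε : ℝ}
  {η : Measure X} [IsProbabilityMeasure η]

lemma FixedPt.integral_iterate_evolOp {μ : Measure X} (hμ : FixedPt κ μ) {f : X → ℝ}
    (hf : BddMeas f) (n : ℕ) :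
    ∫ q, (evolOp κ)^[n] f q ∂μ = (∫ q, evolOp κ (fun _ => 1) q ∂μ) ^ n * ∫ q, f q ∂μ := by
  induction n with
  | zero => simp
  | succ n ih =>
    rw [Function.iterate_succ_apply', hμ _ (hf.iterate_evolOp κ n), ih, pow_succ', mul_assoc]

lemma Minorizes.FK_eq_integral_of_fixedPt (hmin : Minorizes (evolOp κ) ε η) (hε : 0 < ε)
    {μ : Measure X} [IsProbabilityMeasure μ] (hμ : FixedPt κ μ) {f : X → ℝ} (hf : BddMeas f)
    (n : ℕ) : FK κ μ n f = ∫ q, f q ∂μ := by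
  have hpos := hmin.integral_iterate_evolOp_one_pos hε μ n
  rw [hμ.integral_iterate_evolOp (bddMeas_const 1)] at hpos
  rw [FK, hμ.integral_iterate_evolOp hf, hμ.integral_iterate_evolOp (bddMeas_const 1)]
  simp only [integral_const, probReal_univ, smul_eq_mul, mul_one] at hpos ⊢
  exact mul_div_cancel_left₀ _ hpos.ne'

lemma Minorizes.fixedPt_of_tendsto (hmin : Minorizes (evolOp κ) ε η) (hε : 0 < ε)
    {μ ν : Measure X} [IsFiniteMeasure μ] [IsProbabilityMeasure ν]
    (hlim : ∀ A, MeasurableSet A →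
      Tendsto (fun n => (fkMeasure κ ν n).real A) atTop (𝓝 (μ.real A))) :
    FixedPt κ μ := by
  have := hmin.isProbabilityMeasure_fkMeasure hε ν
  have FK_tendsto {f : X → ℝ} (hf : BddMeas f) :
      Tendsto (fun n => FK κ ν n f) atTop (𝓝 (∫ x, f x ∂μ)) := by
    simpa only [FK_eq_integral_fkMeasure hf] using tendsto_integral_of_tendsto_measureReal hlim hf
  intro f hf
  refine tendsto_nhds_unique (FK_tendsto (hf.evolOp κ)) ?_
  simp only [hmin.FK_evolOp hε f]
  exact (FK_tendsto ((bddMeas_const 1).evolOp κ)).mul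
    ((tendsto_add_atTop_iff_nat 1).2 (FK_tendsto hf))

lemma tendsto_one_sub_sq_pow_atTop (hε : ε ∈ Set.Ioo 0 1) :
    Tendsto (fun n : ℕ => (1 - ε ^ 2) ^ n) atTop (𝓝 0) :=
  tendsto_pow_atTop_nhds_zero_of_lt_one (sub_nonneg.2 (pow_le_one₀ hε.1.le hε.2.le))
    (sub_lt_self 1 (pow_pos hε.1 2))

lemma Minorizes.abs_fkMeasure_sub_fkMeasure_le (hmin : Minorizes (evolOp κ) ε η) (hε : 0 < ε)
    (μ ν : Measure X) [IsProbabilityMeasure μ] [IsProbabilityMeasure ν] {m n : ℕ} (hnm : n ≤ m)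
    {A : Set X} (hA : MeasurableSet A) :
    |(fkMeasure κ μ n).real A - (fkMeasure κ ν m).real A| ≤ (1 - ε ^ 2) ^ n := by
  obtain ⟨k, rfl⟩ := Nat.exists_eq_add_of_le hnm
  have := hmin.isProbabilityMeasure_fkMeasure hε ν k
  have indicator_mem (x : X) : A.indicator (fun _ => (1 : ℝ)) x ∈ Set.Icc 0 1 :=
    ⟨Set.indicator_nonneg (fun _ _ => zero_le_one) x,
      Set.indicator_le' (fun _ _ => le_rfl) (fun _ _ => zero_le_one) x⟩
  rw [← FK_indicator_one_eq_fkMeasure_real hA, ← FK_indicator_one_eq_fkMeasure_real hA,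
    hmin.FK_add hε (bddMeas_indicator_one hA)]
  simpa using hmin.abs_FK_sub_FK_le hε (bddMeas_indicator_one hA) indicator_mem μ
    (fkMeasure κ ν k) n

lemma Minorizes.exists_tendsto_fkMeasure (hmin : Minorizes (evolOp κ) ε η)
    (hε : ε ∈ Set.Ioo 0 1) (μ : Measure X) [IsProbabilityMeasure μ] :
    ∃ μinf : Measure X, IsProbabilityMeasure μinf ∧ ∀ A, MeasurableSet A →
      Tendsto (fun n => (fkMeasure κ μ n).real A) atTop (𝓝 (μinf.real A)) := by
  have := hmin.isProbabilityMeasure_fkMeasure hε.1 μ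
  have dominated : ∀ᶠ n in atTop, fkMeasure κ μ n ≤ ENNReal.ofReal (ε⁻¹ ^ 2) • η :=
    (eventually_ge_atTop 1).mono fun n hn => by
      simpa only [Nat.sub_add_cancel hn] using hmin.fkMeasure_succ_le hε.1 μ (n - 1)
  have setwise_limit A (hA : MeasurableSet A) :
      ∃ c, Tendsto (fun n => fkMeasure κ μ n A) atTop (𝓝 c) := by
    have cauchy : CauchySeq fun n => (fkMeasure κ μ n).real A :=
      cauchySeq_of_le_tendsto_0' _
        (fun n m hnm => hmin.abs_fkMeasure_sub_fkMeasure_le hε.1 μ μ hnm hA)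
        (tendsto_one_sub_sq_pow_atTop hε)
    obtain ⟨c, hc⟩ := cauchySeq_tendsto_of_complete cauchy
    exact ⟨ENNReal.ofReal c, (ENNReal.tendsto_ofReal hc).congr fun n => ofReal_measureReal⟩
  have : IsFiniteMeasure (ENNReal.ofReal (ε⁻¹ ^ 2) • η) := η.smul_finite ENNReal.ofReal_ne_top
  obtain ⟨μinf, hlim⟩ := exists_measure_tendsto_of_eventually_le dominated setwise_limit
  have prob : IsProbabilityMeasure μinf :=
    ⟨tendsto_nhds_unique (hlim Set.univ .univ) (by simp only [measure_univ, tendsto_const_nhds])⟩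
  exact ⟨μinf, prob, fun A hA =>
    (ENNReal.tendsto_toReal (measure_ne_top μinf A)).comp (hlim A hA)⟩

end InvariantMeasure

/-- Ergodicity of the discretized Feynman–Kac semigroup: under minorization there is a unique
invariant probability measure, and any initial probability measure converges to it in total
variation at rate `2(1-ε²)ⁿ`. -/
theorem feynman_kac_unique_invariant_measure_and_convergence
    {X : Type*} [MeasurableSpace X] (κ : Kernel X X) [IsFiniteKernel κ]
    (ε : ℝ) (hε : ε ∈ Set.Ioo (0:ℝ) 1) (η : Measure X) [IsProbabilityMeasure η]
    (hmin : Minorizes (evolOp κ) ε η) :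
    ∃ μinf : Measure X, IsProbabilityMeasure μinf ∧ FixedPt κ μinf ∧
      (∀ μ' : Measure X, IsProbabilityMeasure μ' → FixedPt κ μ' → μ' = μinf) ∧
      (∀ μ : Measure X, IsProbabilityMeasure μ → ∀ n : ℕ, ∀ A : Set X, MeasurableSet A →
        |FK κ μ n (A.indicator fun _ => (1:ℝ)) - (μinf A).toReal| ≤ 2 * (1 - ε ^ 2) ^ n) := by
  obtain ⟨μinf, hprob, hlim⟩ := hmin.exists_tendsto_fkMeasure hε η
  have rate (μ : Measure X) [IsProbabilityMeasure μ] (n : ℕ) {A : Set X} (hA : MeasurableSet A) :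
      |(fkMeasure κ μ n).real A - μinf.real A| ≤ (1 - ε ^ 2) ^ n :=
    le_of_tendsto (tendsto_const_nhds.sub (hlim A hA)).abs <|
      (eventually_ge_atTop n).mono fun _ hnm =>
        hmin.abs_fkMeasure_sub_fkMeasure_le hε.1 μ η hnm hA
  refine ⟨μinf, hprob, hmin.fixedPt_of_tendsto hε.1 hlim, fun μ' _ hfix => ?_,
    fun μ _ n A hA => ?_⟩
  · ext A hA
    have real_eq (n : ℕ) : (fkMeasure κ μ' n).real A = μ'.real A := by
      rw [← FK_indicator_one_eq_fkMeasure_real hA,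
        hmin.FK_eq_integral_of_fixedPt hε.1 hfix (bddMeas_indicator_one hA)]
      exact integral_indicator_one hA
    have dist_le : |μ'.real A - μinf.real A| ≤ 0 :=
      ge_of_tendsto' (tendsto_one_sub_sq_pow_atTop hε) fun n => real_eq n ▸ rate μ' n hA
    exact (measureReal_eq_measureReal_iff).1 (sub_eq_zero.1 (abs_nonpos_iff.1 dist_le))
  · rw [FK_indicator_one_eq_fkMeasure_real hA]
    have bound := rate μ n hA
    exact bound.trans (le_mul_of_one_le_left ((abs_nonneg _).trans bound) one_le_two)
end

section
/- Let d ≥ 1 and let S denote the space of smooth ℤ^d-periodic functions ℝ^d → ℝ. Let p ≥ 1, Δt* > 0, and let A_1, …, A_{p+1} : S → S be linear maps with A_1 1 = 0 such that each A_k is bounded from some C^{m_k} norm to the C⁰ norm (there exist c_k ≥ 0 and m_k ∈ ℕ with ‖A_k φ‖_{C⁰} ≤ c_k ‖φ‖_{C^{m_k}} for all φ ∈ S). Let (Q_Δt)_{Δt ∈ (0,Δt*]} be linear maps S → S such that the remainders R_Δt φ := Δt^{−(p+2)}(Q_Δt φ − φ − Σ_{k=1}^{p+1} Δt^k A_k φ)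 satisfy a uniform bound: there exist c > 0 and m ∈ ℕ with ‖R_Δt φ‖_{C⁰} ≤ c ‖φ‖_{C^m} for all Δt ∈ (0,Δt*] and φ ∈ S. Let W ∈ S and define Q_Δt^W φ := e^{Δt W} · Q_Δt φ (pointwise multiplication). Then, setting A_0 = Id and Ã_k φ := Σ_{j=0}^{k} (W^j / j!) · A_{k−j} φ for k = 1, …, p+1 (so in particular Ã_1 = A_1 + W, meaning Ã_1 φ = A_1 φ + Wφ), the remainders R_{W,Δt} φ := Δt^{−(p+2)}(Q_Δt^W φ − φ − Σ_{k=1}^{p+1} Δt^k Ã_k φ) satisfy a uniform bound of the same type: there exist c' > 0 and m' ∈ ℕ with ‖R_{W,Δt} φ‖_{C⁰} ≤ c' ‖φ‖_{C^{m'}} for all Δt ∈ (0,Δt*] and φ ∈ S. -/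
open MeasureTheory Finset

/-- Partial derivative in the i-th coordinate direction. -/
noncomputable def pderiv' {d : ℕ} (i : Fin d) (f : (Fin d → ℝ) → ℝ) (q : Fin d → ℝ) : ℝ :=
  fderiv ℝ f q (Pi.single i 1)

/-- A function on ℝ^d is ℤ^d-periodic if it is invariant under translation by every
vector of ℤ^d. -/
def ZPeriodic {d : ℕ} (f : (Fin d → ℝ) → ℝ) : Prop :=
  ∀ (q : Fin d → ℝ) (m : Fin d → ℤ), f (fun i => q i + (m i : ℝ)) = f q

/-- The space S of smooth ℤ^d-periodic functions. -/
def SmoothPeriodic {d : ℕ} (f : (Fin d → ℝ) → ℝ) : Prop :=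
  ContDiff ℝ (⊤ : ℕ∞) f ∧ ZPeriodic f

/-- Iterated partial derivative `∂^α` along a list of coordinate directions. -/
noncomputable def iterPDeriv {d : ℕ} : List (Fin d) → ((Fin d → ℝ) → ℝ) → (Fin d → ℝ) → ℝ
  | [], f => f
  | i :: l, f => pderiv' i (iterPDeriv l f)

/-- The C^m norm: `‖f‖_{C^m} = sup_{|α| ≤ m} sup_q |∂^α f(q)|`. -/
noncomputable def CmNorm {d : ℕ} (m : ℕ) (f : (Fin d → ℝ) → ℝ) : ℝ :=
  ⨆ p : {l : List (Fin d) // l.length ≤ m} × (Fin d → ℝ), |iterPDeriv p.1.1 f p.2|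

/-! Expansions in powers of `Δt` multiply by the Cauchy product: if `u = ∑ Δt^k a_k + O(Δt^n)` and
`v = ∑ Δt^k b_k + O(Δt^n)`, then regrouping the double sum gives
`v u - ∑_k Δt^k ∑_{j ≤ k} b_j a_{k-j}
  = (v - ∑_{j < n} Δt^j b_j) u + ∑_{j < n} Δt^j b_j (u - ∑_{i < n-j} Δt^i a_i)`,
and every summand on the right is `O(Δt^n)`. Take `u = Q_Δt φ` and `v = e^{ΔtW}`, whose coefficients
`W^j / j!` are bounded. A bound uniform in `Δt`, `φ` and `q` is the same thing as an estimate along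
the principal filter of all admissible triples `(Δt, φ, q)`, so no constant needs tracking. -/

open Filter Asymptotics

theorem sum_range_succ_eq_add_sum_Icc_one {M : Type*} [AddCommMonoid M] (F : ℕ → M) (n : ℕ) :
    ∑ k ∈ range (n + 1), F k = F 0 + ∑ k ∈ Icc 1 n, F k := by
  rw [range_eq_Ico, sum_eq_sum_Ico_succ_bot n.succ_pos]
  rfl

section Expansion

variable {α R : Type*} {l : Filter α}

/-- The expansion `u = ∑_{k < n} t^k a_k + O(t^n g)` along the filter `l`, with coefficients
`a_k = O(g)`. The gauge `g` and the small parameter `t` are functions, like `u`, so that estimates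
uniform in further variables are covered. -/
structure HasExpansion [NormedCommRing R] (l : Filter α) (t : α → R) (n : ℕ) (a : ℕ → α → R)
    (g u : α → R) : Prop where
  coeff_isBigO : ∀ k < n, a k =O[l] g
  remainder_isBigO : (u - ∑ k ∈ range n, t ^ k * a k) =O[l] (t ^ n * g)

theorem mul_sub_sum_cauchyProduct [CommRing R] (n : ℕ) (t u v : R) (a b : ℕ → R) :
    v * u - ∑ k ∈ range n, t ^ k * ∑ j ∈ range (k + 1), b j * a (k - j) =
      (v - ∑ j ∈ range n, t ^ j * b j) * u +
        ∑ j ∈ range n, t ^ j * b j * (u - ∑ i ∈ range (n - j), t ^ i * a i) := by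
  have regroup : ∑ k ∈ range n, t ^ k * ∑ j ∈ range (k + 1), b j * a (k - j) =
      ∑ j ∈ range n, t ^ j * b j * ∑ i ∈ range (n - j), t ^ i * a i := by
    simp only [mul_sum]
    rw [← sum_range_diag_flip n fun j i ↦ t ^ j * b j * (t ^ i * a i)]
    refine sum_congr rfl fun k _ ↦ sum_congr rfl fun j hj ↦ ?_
    rw [← Nat.add_sub_of_le (mem_range_succ_iff.mp hj), pow_add, Nat.add_sub_cancel_left]
    ring
  simp only [regroup, mul_sub, sum_sub_distrib, ← sum_mul]
  ring

namespace HasExpansion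

variable [NormedCommRing R] [NormMulClass R] {t g h u v : α → R} {m n : ℕ} {a b : ℕ → α → R}

theorem truncate (hu : HasExpansion l t n a g u) (ht : t =O[l] (1 : α → R)) (hmn : m ≤ n) :
    HasExpansion l t m a g u := by
  induction hmn using Nat.decreasingInduction with
  | self => exact hu
  | of_succ k _ ih =>
    have last_term : (t ^ k * a k) =O[l] (t ^ k * g) :=
      (isBigO_refl (t ^ k) l).mul (ih.coeff_isBigO k k.lt_succ_self)
    have remainder : (t ^ (k + 1) * g) =O[l] (t ^ k * g) := by
      rw [pow_succ]
      exact (((isBigO_refl (t ^ k) l).mul ht).mul (isBigO_refl g l)).congr_right fun x ↦ by simp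
    have peel : u - ∑ i ∈ range k, t ^ i * a i =
        u - ∑ i ∈ range (k + 1), t ^ i * a i + t ^ k * a k := by
      rw [sum_range_succ]
      ring
    refine ⟨fun i hi ↦ ih.coeff_isBigO i (hi.trans k.lt_succ_self), ?_⟩
    rw [peel]
    exact (ih.remainder_isBigO.trans remainder).add last_term

theorem isBigO (hu : HasExpansion l t n a g u) (ht : t =O[l] (1 : α → R)) : u =O[l] g := by
  simpa using (hu.truncate ht n.zero_le).remainder_isBigO

theorem mul (hv : HasExpansion l t n b h v) (hu : HasExpansion l t n a g u)
    (ht : t =O[l] (1 : α → R)) :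
    HasExpansion l t n (fun k ↦ ∑ j ∈ range (k + 1), b j * a (k - j)) (h * g) (v * u) where
  coeff_isBigO k hk := .sum fun j hj ↦
    (hv.coeff_isBigO j ((mem_range_succ_iff.mp hj).trans_lt hk)).mul
      (hu.coeff_isBigO (k - j) ((k.sub_le j).trans_lt hk))
  remainder_isBigO := by
    rw [mul_sub_sum_cauchyProduct]
    refine .add ?_ (.sum fun j hj ↦ ?_)
    · rw [← mul_assoc]
      exact hv.remainder_isBigO.mul (hu.isBigO ht)
    · have hjn : j < n := mem_range.mp hj
      have split : t ^ n * (h * g) = t ^ j * h * (t ^ (n - j) * g) := by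
        rw [← pow_mul_pow_sub t hjn.le]
        ring
      rw [split]
      exact ((isBigO_refl (t ^ j) l).mul (hv.coeff_isBigO j hjn)).mul
        (hu.truncate ht (n.sub_le j)).remainder_isBigO

end HasExpansion

theorem abs_exp_sub_sum_le_abs_pow_mul_exp (x : ℝ) (n : ℕ) :
    |Real.exp x - ∑ j ∈ range n, x ^ j / j.factorial| ≤ |x| ^ n * Real.exp |x| := by
  exact_mod_cast Complex.norm_exp_sub_sum_le_norm_mul_exp (x : ℂ) n

theorem hasExpansion_exp_mul {t w : α → ℝ} (ht : t =O[l] (1 : α → ℝ)) (hw : w =O[l] (1 : α → ℝ))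
    (n : ℕ) :
    HasExpansion l t n (fun j x ↦ w x ^ j / j.factorial) 1 (fun x ↦ Real.exp (t x * w x)) where
  coeff_isBigO j _ := ((hw.pow j).const_mul_left (j.factorial : ℝ)⁻¹).congr
    (fun _ ↦ (div_eq_inv_mul _ _).symm) (fun _ ↦ one_pow j)
  remainder_isBigO := by
    have tw_bounded : (fun x ↦ t x * w x) =O[l] fun _ ↦ (1 : ℝ) :=
      (ht.mul hw).congr_right fun _ ↦ mul_one 1
    have exp_bounded : (fun x ↦ Real.exp |t x * w x|) =O[l] fun _ ↦ (1 : ℝ) :=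
      Real.isBigO_exp_comp_one.mpr ((isBigO_one_iff ℝ).mp tw_bounded)
    have taylor : (fun x ↦ Real.exp (t x * w x) - ∑ j ∈ range n, (t x * w x) ^ j / j.factorial)
        =O[l] fun x ↦ (t x * w x) ^ n * Real.exp |t x * w x| :=
      isBigO_of_le l fun x ↦ by
        simpa only [Real.norm_eq_abs, abs_mul, abs_pow, Real.abs_exp]
          using abs_exp_sub_sum_le_abs_pow_mul_exp (t x * w x) n
    have scale : (fun x ↦ (t x * w x) ^ n * Real.exp |t x * w x|) =O[l] (t ^ n * 1) :=
      ((((isBigO_refl t l).mul hw).pow n).mul exp_bounded).congr_right fun x ↦ by simp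
    refine (taylor.trans scale).congr_left fun x ↦ ?_
    simp [mul_pow, mul_div_assoc]

end Expansion

section UniformBounds

variable {X : Type*}

/-- Estimates `=O` along this filter are estimates with a constant uniform in the time step
`Δt ∈ (0, Δts]`, the test function `f ∈ S` and the point `q`. -/
def schemeFilter (Δts : ℝ) (S : Set (X → ℝ)) : Filter (ℝ × (X → ℝ) × X) :=
  𝓟 {z | z.1 ∈ Set.Ioc 0 Δts ∧ z.2.1 ∈ S}

/-- A scale of norms `N 0 ≤ N 1 ≤ ⋯` on the test functions `S`, all of them at least the supremum
norm; the `C^m` norms are the example in view. -/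
structure IsNormScale (S : Set (X → ℝ)) (N : ℕ → (X → ℝ) → ℝ) : Prop where
  monotone : ∀ f ∈ S, Monotone fun m ↦ N m f
  abs_le : ∀ f ∈ S, ∀ q, |f q| ≤ N 0 f

variable {Δts : ℝ} {S : Set (X → ℝ)} {N : ℕ → (X → ℝ) → ℝ}

theorem isBigO_schemeFilter_of_abs_le {u v : ℝ × (X → ℝ) × X → ℝ} {c : ℝ} (hc : 0 ≤ c)
    (huv : ∀ Δt ∈ Set.Ioc 0 Δts, ∀ f ∈ S, ∀ q, |u (Δt, f, q)| ≤ c * v (Δt, f, q)) :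
    u =O[schemeFilter Δts S] v :=
  isBigO_principal.mpr ⟨c, fun z hz ↦ (huv z.1 hz.1 z.2.1 hz.2 z.2.2).trans
    (mul_le_mul_of_nonneg_left (le_abs_self _) hc)⟩

theorem exists_abs_le_of_isBigO_schemeFilter {u v : ℝ × (X → ℝ) × X → ℝ}
    (hv : ∀ Δt ∈ Set.Ioc 0 Δts, ∀ f ∈ S, ∀ q, 0 ≤ v (Δt, f, q))
    (huv : u =O[schemeFilter Δts S] v) :
    ∃ c, 0 < c ∧ ∀ Δt ∈ Set.Ioc 0 Δts, ∀ f ∈ S, ∀ q, |u (Δt, f, q)| ≤ c * v (Δt, f, q) := by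
  obtain ⟨c, hc, huv⟩ := huv.exists_pos
  refine ⟨c, hc, fun Δt hΔt f hf q ↦ ?_⟩
  simpa only [Real.norm_eq_abs, abs_of_nonneg (hv Δt hΔt f hf q)] using
    eventually_principal.mp huv.bound (Δt, f, q) ⟨hΔt, hf⟩

theorem fst_isBigO_schemeFilter_one :
    Prod.fst =O[schemeFilter Δts S] (1 : ℝ × (X → ℝ) × X → ℝ) :=
  isBigO_principal.mpr ⟨Δts, fun z hz ↦ by simpa [abs_of_pos hz.1.1] using hz.1.2⟩

theorem bounded_isBigO_schemeFilter_one {W : X → ℝ} {C : ℝ} (hW : ∀ q, |W q| ≤ C) :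
    (fun z ↦ W z.2.2) =O[schemeFilter Δts S] (1 : ℝ × (X → ℝ) × X → ℝ) :=
  isBigO_of_le' (c := C) _ fun z ↦ by simpa using hW z.2.2

namespace IsNormScale

theorem nonneg (hN : IsNormScale S N) {f : X → ℝ} (hf : f ∈ S) (q : X) (m : ℕ) : 0 ≤ N m f :=
  (abs_nonneg (f q)).trans ((hN.abs_le f hf q).trans (hN.monotone f hf m.zero_le))

theorem isBigO_of_le (hN : IsNormScale S N) {m M : ℕ} (hmM : m ≤ M) :
    (fun z ↦ N m z.2.1) =O[schemeFilter Δts S] fun z ↦ N M z.2.1 :=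
  .of_bound' <| eventually_principal.mpr fun z hz ↦ by
    simpa only [Real.norm_of_nonneg (hN.nonneg hz.2 z.2.2 _)] using hN.monotone z.2.1 hz.2 hmM

theorem eventually_isBigO (hN : IsNormScale S N) {u v : ℝ × (X → ℝ) × X → ℝ} {m : ℕ}
    (hu : u =O[schemeFilter Δts S] (v * fun z ↦ N m z.2.1)) :
    ∀ᶠ M in atTop, u =O[schemeFilter Δts S] (v * fun z ↦ N M z.2.1) :=
  (eventually_ge_atTop m).mono fun _ hM ↦
    hu.trans ((isBigO_refl v _).mul (hN.isBigO_of_le hM))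

theorem exists_hasExpansion (hN : IsNormScale S N) {n : ℕ} {A : ℕ → (X → ℝ) → X → ℝ}
    (hA0 : A 0 = id)
    (hAbdd : ∀ k ∈ Icc 1 n, ∃ c : ℝ, 0 ≤ c ∧ ∃ m : ℕ, ∀ f ∈ S, ∀ q, |A k f q| ≤ c * N m f)
    {Q : ℝ → (X → ℝ) → X → ℝ}
    (hR : ∃ c : ℝ, 0 < c ∧ ∃ m : ℕ, ∀ Δt ∈ Set.Ioc 0 Δts, ∀ f ∈ S, ∀ q,
      |Q Δt f q - f q - ∑ k ∈ Icc 1 n, Δt ^ k * A k f q| ≤ c * Δt ^ (n + 1) * N m f) :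
    ∃ M, HasExpansion (schemeFilter Δts S) Prod.fst (n + 1) (fun k z ↦ A k z.2.1 z.2.2)
      (fun z ↦ N M z.2.1) (fun z ↦ Q z.1 z.2.1 z.2.2) := by
  have coeff : ∀ k ∈ range (n + 1), ∀ᶠ M in atTop,
      (fun z ↦ A k z.2.1 z.2.2) =O[schemeFilter Δts S] (1 * fun z ↦ N M z.2.1) := by
    intro k hk
    obtain ⟨c, hc, m, hA⟩ : ∃ c : ℝ, 0 ≤ c ∧ ∃ m, ∀ f ∈ S, ∀ q, |A k f q| ≤ c * N m f := by
      rcases k.eq_zero_or_pos with rfl | hk0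
      · exact ⟨1, zero_le_one, 0, by simpa only [hA0, id, one_mul] using hN.abs_le⟩
      · exact hAbdd k (mem_Icc.mpr ⟨hk0, mem_range_succ_iff.mp hk⟩)
    refine hN.eventually_isBigO (m := m) (isBigO_schemeFilter_of_abs_le hc fun _ _ f hf q ↦ ?_)
    simpa using hA f hf q
  obtain ⟨c, hc, m, hR⟩ := hR
  have remainder : ∀ᶠ M in atTop,
      ((fun z ↦ Q z.1 z.2.1 z.2.2) - ∑ k ∈ range (n + 1), Prod.fst ^ k * fun z ↦ A k z.2.1 z.2.2)
        =O[schemeFilter Δts S] (Prod.fst ^ (n + 1) * fun z ↦ N M z.2.1) := by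
    refine hN.eventually_isBigO (m := m) (isBigO_schemeFilter_of_abs_le hc.le
      fun Δt hΔt f hf q ↦ ?_)
    simpa [sum_range_succ_eq_add_sum_Icc_one, hA0, sub_sub, mul_assoc] using hR Δt hΔt f hf q
  obtain ⟨M, hcoeff, hremainder⟩ := (((eventually_all_finset _).mpr coeff).and remainder).exists
  exact ⟨M, fun k hk ↦ by simpa only [one_mul] using hcoeff k (mem_range.mpr hk), hremainder⟩

end IsNormScale

theorem expansion_of_weighted_scheme_general (hN : IsNormScale S N) (n : ℕ)
    (A : ℕ → (X → ℝ) → X → ℝ) (hA0 : A 0 = id)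
    (hAbdd : ∀ k ∈ Icc 1 n, ∃ c : ℝ, 0 ≤ c ∧ ∃ m : ℕ, ∀ f ∈ S, ∀ q, |A k f q| ≤ c * N m f)
    (Q : ℝ → (X → ℝ) → X → ℝ)
    (hR : ∃ c : ℝ, 0 < c ∧ ∃ m : ℕ, ∀ Δt ∈ Set.Ioc 0 Δts, ∀ f ∈ S, ∀ q,
      |Q Δt f q - f q - ∑ k ∈ Icc 1 n, Δt ^ k * A k f q| ≤ c * Δt ^ (n + 1) * N m f)
    (W : X → ℝ) (hW : ∃ C, ∀ q, |W q| ≤ C) :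
    ∃ c' : ℝ, 0 < c' ∧ ∃ m' : ℕ, ∀ Δt ∈ Set.Ioc 0 Δts, ∀ f ∈ S, ∀ q,
      |Real.exp (Δt * W q) * Q Δt f q - f q -
          ∑ k ∈ Icc 1 n, Δt ^ k *
            ∑ j ∈ range (k + 1), W q ^ j / j.factorial * A (k - j) f q|
        ≤ c' * Δt ^ (n + 1) * N m' f := by
  obtain ⟨C, hW⟩ := hW
  obtain ⟨m, hQ⟩ := hN.exists_hasExpansion hA0 hAbdd hR
  have hexp := hasExpansion_exp_mul fst_isBigO_schemeFilter_one
    (bounded_isBigO_schemeFilter_one (Δts := Δts) (S := S) hW) (n + 1)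
  obtain ⟨c, hc, hbound⟩ := exists_abs_le_of_isBigO_schemeFilter
    (fun Δt hΔt f hf q ↦ by simpa using mul_nonneg (pow_pos hΔt.1 _).le (hN.nonneg hf q m))
    (hexp.mul hQ fst_isBigO_schemeFilter_one).remainder_isBigO
  refine ⟨c, hc, m, fun Δt hΔt f hf q ↦ ?_⟩
  simpa [sum_range_succ_eq_add_sum_Icc_one, hA0, sub_sub, mul_assoc] using hbound Δt hΔt f hf q

end UniformBounds

section Periodic

variable {d : ℕ} {f : (Fin d → ℝ) → ℝ}

theorem ZPeriodic.exists_abs_le (hf : ZPeriodic f) (hcont : Continuous f) :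
    ∃ C, ∀ q, |f q| ≤ C := by
  obtain ⟨C, hC⟩ := (isCompact_Icc (a := (0 : Fin d → ℝ)) (b := 1)).exists_bound_of_continuousOn
    hcont.continuousOn
  refine ⟨C, fun q ↦ ?_⟩
  have translate : f (fun i ↦ Int.fract (q i)) = f q := by
    simpa only [Int.fract_add_floor] using (hf (fun i ↦ Int.fract (q i)) fun i ↦ ⌊q i⌋).symm
  rw [← translate]
  exact hC _ ⟨fun i ↦ Int.fract_nonneg _, fun i ↦ (Int.fract_lt_one _).le⟩

theorem ZPeriodic.pderiv' (hf : ZPeriodic f) (i : Fin d) : ZPeriodic (pderiv' i f) := fun q m ↦ by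
  have translate : (fun x ↦ f (x + fun i ↦ (m i : ℝ))) = f := funext fun x ↦ hf x m
  have fderiv_translate := fderiv_comp_add_right (𝕜 := ℝ) (f := f) (x := q) fun i ↦ (m i : ℝ)
  rw [translate] at fderiv_translate
  exact congrArg (· (Pi.single i 1)) fderiv_translate.symm

namespace SmoothPeriodic

theorem exists_abs_le (hf : SmoothPeriodic f) : ∃ C, ∀ q, |f q| ≤ C :=
  hf.2.exists_abs_le hf.1.continuous

theorem pderiv' (hf : SmoothPeriodic f) (i : Fin d) : SmoothPeriodic (pderiv' i f) :=
  ⟨(hf.1.fderiv_right (by simp)).clm_apply contDiff_const, hf.2.pderiv' i⟩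

theorem iterPDeriv (hf : SmoothPeriodic f) : ∀ l : List (Fin d), SmoothPeriodic (iterPDeriv l f)
  | [] => hf
  | i :: l => (hf.iterPDeriv l).pderiv' i

theorem bddAbove_iterPDeriv (hf : SmoothPeriodic f) (m : ℕ) :
    BddAbove (Set.range fun p : {l : List (Fin d) // l.length ≤ m} × (Fin d → ℝ) ↦
      |_root_.iterPDeriv p.1.1 f p.2|) := by
  choose C hC using fun l ↦ (hf.iterPDeriv l).exists_abs_le
  obtain ⟨D, hD⟩ := ((List.finite_length_le (Fin d) m).image C).bddAbove
  refine ⟨D, ?_⟩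
  rintro _ ⟨⟨⟨l, hl⟩, q⟩, rfl⟩
  exact (hC l q).trans (hD ⟨l, hl, rfl⟩)

theorem abs_iterPDeriv_le_cmNorm (hf : SmoothPeriodic f) {m : ℕ} {l : List (Fin d)}
    (hl : l.length ≤ m) (q : Fin d → ℝ) : |_root_.iterPDeriv l f q| ≤ CmNorm m f :=
  le_ciSup (hf.bddAbove_iterPDeriv m) (⟨l, hl⟩, q)

theorem cmNorm_monotone (hf : SmoothPeriodic f) : Monotone fun m ↦ CmNorm m f := fun m _ hmn ↦
  have : Nonempty {l : List (Fin d) // l.length ≤ m} := ⟨[], m.zero_le⟩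
  ciSup_le fun p ↦ hf.abs_iterPDeriv_le_cmNorm (p.1.2.trans hmn) p.2

end SmoothPeriodic

theorem isNormScale_cmNorm (d : ℕ) :
    IsNormScale {f : (Fin d → ℝ) → ℝ | SmoothPeriodic f} CmNorm where
  monotone _ hf := hf.cmNorm_monotone
  abs_le _ hf q := hf.abs_iterPDeriv_le_cmNorm (l := []) le_rfl q

end Periodic

/-- If (Q_Δt) admits a uniform expansion `Q_Δt = Id + Σ_{k=1}^{p+1} Δt^k A_k + O(Δt^{p+2})`
with `A_1 1 = 0`, then the weighted operator `Q_Δt^W = e^{ΔtW} Q_Δt` admits the uniform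
expansion with operators `Ã_k = Σ_{j=0}^k (W^j/j!) A_{k−j}` (with `A_0 = Id`), so in
particular `Ã_1 = A_1 + W`. -/
theorem expansion_of_weighted_scheme
    (d : ℕ) (hd : 1 ≤ d) (p : ℕ) (hp : 1 ≤ p) (Δts : ℝ) (hΔts : 0 < Δts)
    (A : ℕ → ((Fin d → ℝ) → ℝ) → ((Fin d → ℝ) → ℝ))
    (hA0 : A 0 = id)
    (hAmap : ∀ k ∈ Finset.Icc 1 (p + 1), ∀ f, SmoothPeriodic f → SmoothPeriodic (A k f))
    (hAadd : ∀ k ∈ Finset.Icc 1 (p + 1), ∀ f g, SmoothPeriodic f → SmoothPeriodic g →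
      A k (f + g) = A k f + A k g)
    (hAsmul : ∀ k ∈ Finset.Icc 1 (p + 1), ∀ (c : ℝ) (f), SmoothPeriodic f →
      A k (c • f) = c • A k f)
    (hA1one : A 1 (fun _ => (1:ℝ)) = fun _ => (0:ℝ))
    (hAbdd : ∀ k ∈ Finset.Icc 1 (p + 1), ∃ c : ℝ, 0 ≤ c ∧ ∃ m : ℕ,
      ∀ f, SmoothPeriodic f → ∀ q, |A k f q| ≤ c * CmNorm m f)
    (Q : ℝ → ((Fin d → ℝ) → ℝ) → ((Fin d → ℝ) → ℝ))
    (hQmap : ∀ Δt ∈ Set.Ioc (0:ℝ) Δts, ∀ f, SmoothPeriodic f → SmoothPeriodic (Q Δt f))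
    (hQadd : ∀ Δt ∈ Set.Ioc (0:ℝ) Δts, ∀ f g, SmoothPeriodic f → SmoothPeriodic g →
      Q Δt (f + g) = Q Δt f + Q Δt g)
    (hQsmul : ∀ Δt ∈ Set.Ioc (0:ℝ) Δts, ∀ (c : ℝ) (f), SmoothPeriodic f →
      Q Δt (c • f) = c • Q Δt f)
    (hR : ∃ c : ℝ, 0 < c ∧ ∃ m : ℕ, ∀ Δt ∈ Set.Ioc (0:ℝ) Δts, ∀ f, SmoothPeriodic f → ∀ q,
      |Q Δt f q - f q - ∑ k ∈ Finset.Icc 1 (p + 1), Δt ^ k * A k f q|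
        ≤ c * Δt ^ (p + 2) * CmNorm m f)
    (W : (Fin d → ℝ) → ℝ) (hW : SmoothPeriodic W) :
    ∃ c' : ℝ, 0 < c' ∧ ∃ m' : ℕ, ∀ Δt ∈ Set.Ioc (0:ℝ) Δts, ∀ f, SmoothPeriodic f → ∀ q,
      |Real.exp (Δt * W q) * Q Δt f q - f q -
          ∑ k ∈ Finset.Icc 1 (p + 1), Δt ^ k *
            ∑ j ∈ Finset.range (k + 1), W q ^ j / (Nat.factorial j) * A (k - j) f q|
        ≤ c' * Δt ^ (p + 2) * CmNorm m' f :=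
  expansion_of_weighted_scheme_general (isNormScale_cmNorm d) (p + 1) A hA0 hAbdd Q hR W
    hW.exists_abs_le
end
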